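/- Let m ≥ 2, let F be an averaging operator, let C > 0, λ > 0, and let f : 𝕋_m → ℝ satisfy 0 ≤ f(x) ≤ C λ^{l(x)} for all x ∈ 𝕋_m (f is possibly unbounded). Then there exists u : 𝕋_m × [0,∞) → ℝ such that for each x ∈ 𝕋_m the map t ↦ u(x,t) is continuous, 0 ≤ u(x,t) ≤ C e^{(λ−1)t} λ^{l(x)} for all (x,t), and u(x,t) = K_f u(x,t) for all (x,t) ∈ 𝕋_m × [0,∞). -/

import Mathlib

open MeasureTheory Real

/-- `F : ℝ^m → ℝ` is an averaging operator: continuous, `F(0,…,0)=0`, `F(1,…,1)=1`,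
positively homogeneous, translation equivariant, strictly below the max when the
coordinates are not all equal, and nondecreasing in each variable. -/
def IsAveraging (m : ℕ) (F : (Fin m → ℝ) → ℝ) : Prop :=
  Continuous F ∧
  F (fun _ => 0) = 0 ∧
  F (fun _ => 1) = 1 ∧
  (∀ (t : ℝ) (x : Fin m → ℝ), F (fun j => t * x j) = t * F x) ∧
  (∀ (t : ℝ) (x : Fin m → ℝ), F (fun j => t + x j) = t + F x) ∧
  (∀ x : Fin m → ℝ, (∃ i j, x i ≠ x j) → F x < ⨆ j, x j) ∧
  (∀ x y : Fin m → ℝ, (∀ j, x j ≤ y j) → F x ≤ F y)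

/-- The operator `K_f u(x,t) = ∫₀ᵗ e^{z−t} F(u((x,0),z),…,u((x,m−1),z)) dz + e^{−t} f(x)`,
where vertices of the directed tree `𝕋_m` are modeled as lists over `Fin m`
and `(x,i)` is the successor `x ++ [i]`. -/
noncomputable def Kop (m : ℕ) (F : (Fin m → ℝ) → ℝ) (f : List (Fin m) → ℝ)
    (u : List (Fin m) → ℝ → ℝ) (x : List (Fin m)) (t : ℝ) : ℝ :=
  (∫ z in (0:ℝ)..t, Real.exp (z - t) * F (fun i => u (x ++ [i]) z)) +
    Real.exp (-t) * f x

/-!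
Since `F` is monotone, so is `K_f`, and the classical method of ordered sub- and supersolutions
applies: iterating `K_f` from a subsolution `v` lying below a supersolution `w` gives an increasing
sequence trapped between them, and by dominated convergence its pointwise limit is a fixed point.
Here `v = 0`, and `w(x,t) = C e^{(λ−1)t} λ^{l(x)}` is a supersolution because the exponents match:
`∫₀ᵗ e^z w((x,i),z) dz = C λ^{l(x)} ∫₀ᵗ λ e^{λz} dz = C λ^{l(x)} (e^{λt} − 1)`, while
`f(x) ≤ C λ^{l(x)}`.
-/

open Filter Set Topology

section MonotoneIteration

variable {m : ℕ} {F : (Fin m → ℝ) → ℝ} {f : List (Fin m) → ℝ}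
  {u v w : List (Fin m) → ℝ → ℝ} {x : List (Fin m)} {t z : ℝ}

/-- The `F`-average of `u` over the successors of the vertex `x`, as a function of time: the factor
multiplying `e^{z−t}` in the integrand of `K_f u`. -/
def succAverage (F : (Fin m → ℝ) → ℝ) (u : List (Fin m) → ℝ → ℝ) (x : List (Fin m)) (z : ℝ) : ℝ :=
  F fun i => u (x ++ [i]) z

lemma Kop_eq_exp_neg_mul (F : (Fin m → ℝ) → ℝ) (f : List (Fin m) → ℝ)
    (u : List (Fin m) → ℝ → ℝ) (x : List (Fin m)) (t : ℝ) :
    Kop m F f u x t = exp (-t) * ((∫ z in (0 : ℝ)..t, exp z * succAverage F u x z) + f x) := by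
  rw [Kop, mul_add, ← intervalIntegral.integral_const_mul]
  congr 2 with z
  rw [succAverage, sub_eq_neg_add, exp_add, mul_assoc]

lemma succAverage_mono (hF : Monotone F) (huv : ∀ y, u y z ≤ v y z) (x : List (Fin m)) :
    succAverage F u x z ≤ succAverage F v x z :=
  hF fun i => huv (x ++ [i])

lemma abs_succAverage_le_add (hF : Monotone F) (hvu : ∀ y, v y z ≤ u y z)
    (huw : ∀ y, u y z ≤ w y z) (x : List (Fin m)) :
    |succAverage F u x z| ≤ |succAverage F v x z| + |succAverage F w x z| :=
  (abs_le_max_abs_abs (succAverage_mono hF hvu x) (succAverage_mono hF huw x)).trans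
    (max_le_add_of_nonneg (abs_nonneg _) (abs_nonneg _))

lemma tendsto_succAverage (hF : Continuous F) {U : ℕ → List (Fin m) → ℝ → ℝ}
    (hU : ∀ y, Tendsto (fun n => U n y z) atTop (𝓝 (u y z))) (x : List (Fin m)) :
    Tendsto (fun n => succAverage F (U n) x z) atTop (𝓝 (succAverage F u x z)) :=
  (hF.tendsto _).comp (tendsto_pi_nhds.2 fun i => hU (x ++ [i]))

lemma continuousOn_succAverage (hF : Continuous F) (hu : ∀ y, ContinuousOn (u y) (Ici 0))
    (x : List (Fin m)) : ContinuousOn (succAverage F u x) (Ici 0) :=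
  hF.comp_continuousOn (continuousOn_pi.2 fun i => hu (x ++ [i]))

lemma intervalIntegrable_succAverage (hF : Continuous F) (hu : ∀ y, ContinuousOn (u y) (Ici 0))
    (x : List (Fin m)) (ht : 0 ≤ t) : IntervalIntegrable (succAverage F u x) volume 0 t := by
  have hsub : uIcc 0 t ⊆ Ici 0 := by
    rw [uIcc_of_le ht]
    exact Icc_subset_Ici_self
  exact ((continuousOn_succAverage hF hu x).mono hsub).intervalIntegrable

lemma Kop_le_Kop (hF : Monotone F) (ht : 0 ≤ t)
    (hu : IntervalIntegrable (succAverage F u x) volume 0 t)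
    (hv : IntervalIntegrable (succAverage F v x) volume 0 t)
    (huv : ∀ y, ∀ z ≥ 0, u y z ≤ v y z) :
    Kop m F f u x t ≤ Kop m F f v x t := by
  simp only [Kop_eq_exp_neg_mul]
  gcongr ?_ * (?_ + f x)
  refine intervalIntegral.integral_mono_on ht (hu.continuousOn_mul continuous_exp.continuousOn)
    (hv.continuousOn_mul continuous_exp.continuousOn) fun z hz => ?_
  gcongr
  exact succAverage_mono hF (fun y => huv y z hz.1) x

lemma continuousOn_Kop
    (hu : ∀ t ≥ 0, IntervalIntegrable (succAverage F u x) volume 0 t) :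
    ContinuousOn (Kop m F f u x) (Ici 0) := by
  have hprim : ContinuousOn (fun t => ∫ z in (0 : ℝ)..t, exp z * succAverage F u x z) (Ici 0) := by
    refine continuousOn_of_locally_continuousOn fun t ht =>
      ⟨Iio (t + 1), isOpen_Iio, lt_add_one t, ?_⟩
    have ht' : (0 : ℝ) ≤ t + 1 := add_nonneg ht zero_le_one
    refine (intervalIntegral.continuousOn_primitive_interval'
      ((hu (t + 1) ht').continuousOn_mul continuous_exp.continuousOn) left_mem_uIcc).mono ?_
    rw [uIcc_of_le ht']
    exact fun s hs => ⟨hs.1, hs.2.le⟩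
  refine ContinuousOn.congr ?_ fun t _ => Kop_eq_exp_neg_mul F f u x t
  exact (continuous_exp.comp continuous_neg).continuousOn.mul (hprim.add continuousOn_const)

lemma continuousOn_iterate_Kop (hF : Continuous F) (hv : ∀ y, ContinuousOn (v y) (Ici 0)) (n : ℕ) :
    ∀ x, ContinuousOn ((Kop m F f)^[n] v x) (Ici 0) := by
  induction n with
  | zero => exact hv
  | succ n ih =>
    intro x
    rw [Function.iterate_succ_apply']
    exact continuousOn_Kop fun t ht => intervalIntegrable_succAverage hF ih x ht

lemma iterate_Kop_le_iterate_succ (hF : Continuous F) (hmono : Monotone F)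
    (hv : ∀ y, ContinuousOn (v y) (Ici 0)) (hsub : ∀ y, ∀ t ≥ 0, v y t ≤ Kop m F f v y t) (n : ℕ) :
    ∀ x, ∀ t ≥ 0, (Kop m F f)^[n] v x t ≤ (Kop m F f)^[n + 1] v x t := by
  induction n with
  | zero => exact hsub
  | succ n ih =>
    intro x t ht
    rw [Function.iterate_succ_apply' _ n, Function.iterate_succ_apply' _ (n + 1)]
    exact Kop_le_Kop hmono ht
      (intervalIntegrable_succAverage hF (continuousOn_iterate_Kop hF hv n) x ht)
      (intervalIntegrable_succAverage hF (continuousOn_iterate_Kop hF hv (n + 1)) x ht) ih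

lemma iterate_Kop_le_of_supersolution (hF : Continuous F) (hmono : Monotone F)
    (hv : ∀ y, ContinuousOn (v y) (Ici 0)) (hw : ∀ y, ContinuousOn (w y) (Ici 0))
    (hvw : ∀ y, ∀ t ≥ 0, v y t ≤ w y t) (hsuper : ∀ y, ∀ t ≥ 0, Kop m F f w y t ≤ w y t) (n : ℕ) :
    ∀ x, ∀ t ≥ 0, (Kop m F f)^[n] v x t ≤ w x t := by
  induction n with
  | zero => exact hvw
  | succ n ih =>
    intro x t ht
    rw [Function.iterate_succ_apply']
    exact (Kop_le_Kop hmono ht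
      (intervalIntegrable_succAverage hF (continuousOn_iterate_Kop hF hv n) x ht)
      (intervalIntegrable_succAverage hF hw x ht) ih).trans (hsuper x t ht)

lemma intervalIntegrable_succAverage_of_tendsto (hF : Continuous F) (hmono : Monotone F)
    (hv : ∀ y, ContinuousOn (v y) (Ici 0)) (hw : ∀ y, ContinuousOn (w y) (Ici 0))
    {U : ℕ → List (Fin m) → ℝ → ℝ} (hU : ∀ n y, ContinuousOn (U n y) (Ici 0))
    (hvu : ∀ y, ∀ t ≥ 0, v y t ≤ u y t) (huw : ∀ y, ∀ t ≥ 0, u y t ≤ w y t)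
    (hlim : ∀ y, ∀ t ≥ 0, Tendsto (fun n => U n y t) atTop (𝓝 (u y t)))
    (x : List (Fin m)) (ht : 0 ≤ t) : IntervalIntegrable (succAverage F u x) volume 0 t := by
  have hpos : ∀ᵐ z ∂volume.restrict (uIoc 0 t), 0 ≤ z :=
    ae_restrict_of_forall_mem measurableSet_uIoc fun z hz => by
      rw [uIoc_of_le ht] at hz
      exact hz.1.le
  have hmeas : AEStronglyMeasurable (succAverage F u x) (volume.restrict (uIoc 0 t)) :=
    aestronglyMeasurable_of_tendsto_ae atTop
      (fun n => (intervalIntegrable_succAverage hF (hU n) x ht).def'.aestronglyMeasurable)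
      (hpos.mono fun z hz => tendsto_succAverage hF (fun y => hlim y z hz) x)
  exact ((intervalIntegrable_succAverage hF hv x ht).abs.add
    (intervalIntegrable_succAverage hF hw x ht).abs).mono_fun' hmeas
    (hpos.mono fun z hz => abs_succAverage_le_add hmono (fun y => hvu y z hz)
      (fun y => huw y z hz) x)

lemma tendsto_Kop (hF : Continuous F) (hmono : Monotone F)
    (hv : ∀ y, ContinuousOn (v y) (Ici 0)) (hw : ∀ y, ContinuousOn (w y) (Ici 0))
    {U : ℕ → List (Fin m) → ℝ → ℝ} (hU : ∀ n y, ContinuousOn (U n y) (Ici 0))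
    (hvU : ∀ n y, ∀ t ≥ 0, v y t ≤ U n y t) (hUw : ∀ n y, ∀ t ≥ 0, U n y t ≤ w y t)
    (hlim : ∀ y, ∀ t ≥ 0, Tendsto (fun n => U n y t) atTop (𝓝 (u y t)))
    (x : List (Fin m)) (ht : 0 ≤ t) :
    Tendsto (fun n => Kop m F f (U n) x t) atTop (𝓝 (Kop m F f u x t)) := by
  simp only [Kop_eq_exp_neg_mul]
  refine .const_mul _ (.add_const _ ?_)
  have hpos : ∀ z ∈ uIoc 0 t, 0 ≤ z := fun z hz => by
    rw [uIoc_of_le ht] at hz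
    exact hz.1.le
  refine intervalIntegral.tendsto_integral_filter_of_dominated_convergence
    (fun z => exp z * (|succAverage F v x z| + |succAverage F w x z|)) ?meas ?bound ?int ?lim
  case meas =>
    exact .of_forall fun n => ((intervalIntegrable_succAverage hF (hU n) x ht).continuousOn_mul
      continuous_exp.continuousOn).def'.aestronglyMeasurable
  case bound =>
    refine .of_forall fun n => .of_forall fun z hz => ?_
    rw [norm_mul, norm_of_nonneg (exp_pos z).le]
    gcongr
    exact abs_succAverage_le_add hmono (fun y => hvU n y z (hpos z hz))
      (fun y => hUw n y z (hpos z hz)) x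
  case int =>
    exact ((intervalIntegrable_succAverage hF hv x ht).abs.add
      (intervalIntegrable_succAverage hF hw x ht).abs).continuousOn_mul
      continuous_exp.continuousOn
  case lim =>
    exact .of_forall fun z hz =>
      (tendsto_succAverage hF (fun y => hlim y z (hpos z hz)) x).const_mul _

theorem exists_Kop_fixedPoint_of_sub_super (hF : Continuous F) (hmono : Monotone F)
    (hv : ∀ y, ContinuousOn (v y) (Ici 0)) (hw : ∀ y, ContinuousOn (w y) (Ici 0))
    (hvw : ∀ y, ∀ t ≥ 0, v y t ≤ w y t)
    (hsub : ∀ y, ∀ t ≥ 0, v y t ≤ Kop m F f v y t)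
    (hsuper : ∀ y, ∀ t ≥ 0, Kop m F f w y t ≤ w y t) :
    ∃ u : List (Fin m) → ℝ → ℝ, (∀ x, ContinuousOn (u x) (Ici 0)) ∧
      (∀ x, ∀ t ≥ 0, v x t ≤ u x t ∧ u x t ≤ w x t) ∧
      (∀ x, ∀ t ≥ 0, u x t = Kop m F f u x t) := by
  let U n := (Kop m F f)^[n] v
  let u : List (Fin m) → ℝ → ℝ := fun x t => ⨆ n, U n x t
  have hU := continuousOn_iterate_Kop (f := f) hF hv
  have hmonoU : ∀ x, ∀ t ≥ 0, Monotone fun n => U n x t := fun x t ht =>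
    monotone_nat_of_le_succ fun n => iterate_Kop_le_iterate_succ hF hmono hv hsub n x t ht
  have hvU : ∀ n x, ∀ t ≥ 0, v x t ≤ U n x t := fun n x t ht => hmonoU x t ht n.zero_le
  have hUw := iterate_Kop_le_of_supersolution hF hmono hv hw hvw hsuper
  have hlim : ∀ x, ∀ t ≥ 0, Tendsto (fun n => U n x t) atTop (𝓝 (u x t)) := fun x t ht =>
    tendsto_atTop_ciSup (hmonoU x t ht) ⟨w x t, forall_mem_range.2 fun n => hUw n x t ht⟩
  have hvu : ∀ x, ∀ t ≥ 0, v x t ≤ u x t := fun x t ht =>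
    ge_of_tendsto' (hlim x t ht) fun n => hvU n x t ht
  have huw : ∀ x, ∀ t ≥ 0, u x t ≤ w x t := fun x t ht =>
    le_of_tendsto' (hlim x t ht) fun n => hUw n x t ht
  have hfix : ∀ x, ∀ t ≥ 0, u x t = Kop m F f u x t := fun x t ht => by
    refine tendsto_nhds_unique ((hlim x t ht).comp (tendsto_add_atTop_nat 1)) ?_
    simpa only [U, Function.comp_def, Function.iterate_succ_apply'] using
      tendsto_Kop hF hmono hv hw hU hvU hUw hlim x ht
  refine ⟨u, fun x => ContinuousOn.congr ?_ (hfix x), fun x t ht => ⟨hvu x t ht, huw x t ht⟩, hfix⟩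
  exact continuousOn_Kop fun t ht =>
    intervalIntegrable_succAverage_of_tendsto hF hmono hv hw hU hvu huw hlim x ht

end MonotoneIteration

section Barrier

variable {m : ℕ} {F : (Fin m → ℝ) → ℝ} {f : List (Fin m) → ℝ} {C lam t : ℝ}

/-- The barrier `C e^{(λ−1)t} λ^k` that bounds the solution from above at the vertices of
level `k`. -/
noncomputable def expBarrier (C lam : ℝ) (k : ℕ) (t : ℝ) : ℝ :=
  C * exp ((lam - 1) * t) * lam ^ k

lemma expBarrier_nonneg (hC : 0 ≤ C) (hlam : 0 ≤ lam) (k : ℕ) (t : ℝ) :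
    0 ≤ expBarrier C lam k t := by
  unfold expBarrier
  positivity

lemma continuous_expBarrier (C lam : ℝ) (k : ℕ) : Continuous (expBarrier C lam k) := by
  unfold expBarrier
  fun_prop

lemma exp_mul_expBarrier (C lam : ℝ) (k : ℕ) (t : ℝ) :
    exp t * expBarrier C lam k t = C * lam ^ k * exp (lam * t) := by
  have hexp : exp (lam * t) = exp t * exp ((lam - 1) * t) := by rw [← exp_add]; ring_nf
  rw [hexp, expBarrier]
  ring

lemma integral_exp_mul_expBarrier_succ (C lam : ℝ) (k : ℕ) (t : ℝ) :
    ∫ z in (0 : ℝ)..t, exp z * expBarrier C lam (k + 1) z =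
      C * lam ^ k * (exp (lam * t) - 1) := by
  simp only [exp_mul_expBarrier, pow_succ]
  rw [intervalIntegral.integral_const_mul, ← mul_assoc, mul_assoc,
    intervalIntegral.mul_integral_comp_mul_left, integral_exp, mul_zero, exp_zero]

lemma Kop_expBarrier_le (hF : Continuous F) (hconst : ∀ c ≥ 0, F (fun _ => c) ≤ c)
    (hC : 0 ≤ C) (hlam : 0 ≤ lam) {x : List (Fin m)} (hfx : f x ≤ C * lam ^ x.length)
    (ht : 0 ≤ t) :
    Kop m F f (fun y => expBarrier C lam y.length) x t ≤ expBarrier C lam x.length t := by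
  have hcont : ∀ k, Continuous (expBarrier C lam k) := continuous_expBarrier C lam
  have hsucc : ∀ z, succAverage F (fun y => expBarrier C lam y.length) x z ≤
      expBarrier C lam (x.length + 1) z := fun z => by
    simpa only [succAverage, List.length_append, List.length_singleton] using
      hconst _ (expBarrier_nonneg hC hlam (x.length + 1) z)
  have hintegral : ∫ z in (0 : ℝ)..t,
        exp z * succAverage F (fun y => expBarrier C lam y.length) x z ≤
      ∫ z in (0 : ℝ)..t, exp z * expBarrier C lam (x.length + 1) z := by
    refine intervalIntegral.integral_mono ht ?_ ?_ fun z => ?_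
    · exact (intervalIntegrable_succAverage hF (fun y => (hcont y.length).continuousOn) x
        ht).continuousOn_mul continuous_exp.continuousOn
    · exact (continuous_exp.mul (hcont _)).intervalIntegrable 0 t
    · exact mul_le_mul_of_nonneg_left (hsucc z) (exp_pos z).le
  calc Kop m F f (fun y => expBarrier C lam y.length) x t
      ≤ exp (-t) * (C * lam ^ x.length * (exp (lam * t) - 1) + C * lam ^ x.length) := by
        rw [Kop_eq_exp_neg_mul, ← integral_exp_mul_expBarrier_succ]
        gcongr
    _ = exp (-t) * (exp t * expBarrier C lam x.length t) := by
        rw [exp_mul_expBarrier]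
        ring
    _ = expBarrier C lam x.length t := by
        rw [← mul_assoc, ← exp_add, neg_add_cancel, exp_zero, one_mul]

lemma Kop_zero_nonneg (hzero : 0 ≤ F fun _ => 0) {x : List (Fin m)} (hfx : 0 ≤ f x)
    (ht : 0 ≤ t) : 0 ≤ Kop m F f (fun _ _ => 0) x t := by
  have hintegral : 0 ≤ ∫ z in (0 : ℝ)..t, exp (z - t) * F fun _ => 0 :=
    intervalIntegral.integral_nonneg ht fun z _ => mul_nonneg (exp_pos _).le hzero
  exact add_nonneg hintegral (mul_nonneg (exp_pos _).le hfx)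

theorem statement10_general (hF : Continuous F) (hmono : Monotone F)
    (hzero : 0 ≤ F fun _ => 0) (hconst : ∀ c ≥ 0, F (fun _ => c) ≤ c) (hlam : 0 ≤ lam)
    (hf : ∀ x : List (Fin m), 0 ≤ f x ∧ f x ≤ C * lam ^ x.length) :
    ∃ u : List (Fin m) → ℝ → ℝ,
      (∀ x, ContinuousOn (u x) (Ici 0)) ∧
      (∀ x : List (Fin m), ∀ t ≥ 0,
        0 ≤ u x t ∧ u x t ≤ C * exp ((lam - 1) * t) * lam ^ x.length) ∧
      (∀ x, ∀ t ≥ 0, u x t = Kop m F f u x t) := by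
  have hC : 0 ≤ C := by simpa using (hf []).1.trans (hf []).2
  exact exists_Kop_fixedPoint_of_sub_super (v := fun _ _ => 0)
    (w := fun x => expBarrier C lam x.length) hF hmono
    (fun _ => continuousOn_const) (fun x => (continuous_expBarrier C lam x.length).continuousOn)
    (fun x t _ => expBarrier_nonneg hC hlam x.length t)
    (fun x _ ht => Kop_zero_nonneg hzero (hf x).1 ht)
    (fun x _ ht => Kop_expBarrier_le hF hconst hC hlam (hf x).2 ht)

end Barrier

lemma IsAveraging.monotone {m : ℕ} {F : (Fin m → ℝ) → ℝ} (hF : IsAveraging m F) : Monotone F := by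
  obtain ⟨-, -, -, -, -, -, hmono⟩ := hF
  exact hmono

lemma IsAveraging.map_const {m : ℕ} {F : (Fin m → ℝ) → ℝ} (hF : IsAveraging m F) (c : ℝ) :
    F (fun _ => c) = c := by
  obtain ⟨-, -, hone, hhom, -⟩ := hF
  simpa only [mul_one, hone] using hhom c fun _ => 1

/-- existence of a solution of `u = K_f u` for a possibly unbounded
initial datum `f` with `0 ≤ f(x) ≤ C λ^{l(x)}`, satisfying
`0 ≤ u(x,t) ≤ C e^{(λ−1)t} λ^{l(x)}`. -/
theorem statement10 (m : ℕ) (hm : 2 ≤ m) (F : (Fin m → ℝ) → ℝ) (hF : IsAveraging m F)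
    (C lam : ℝ) (hC : 0 < C) (hlam : 0 < lam)
    (f : List (Fin m) → ℝ)
    (hf : ∀ x : List (Fin m), 0 ≤ f x ∧ f x ≤ C * lam ^ x.length) :
    ∃ u : List (Fin m) → ℝ → ℝ,
      (∀ x, ContinuousOn (u x) (Set.Ici (0:ℝ))) ∧
      (∀ x : List (Fin m), ∀ t ≥ (0:ℝ),
        0 ≤ u x t ∧ u x t ≤ C * Real.exp ((lam - 1) * t) * lam ^ x.length) ∧
      (∀ x, ∀ t ≥ (0:ℝ), u x t = Kop m F f u x t) :=
  statement10_general hF.1 hF.monotone (hF.map_const 0).ge (fun c _ => (hF.map_const c).le)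
    hlam.le hf
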